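/- Let Θ be a finite set of states, R a finite set of receivers with |R| = n̄ ≥ 2, each r ∈ R with a finite action set A^r of cardinality at most ϱ, where ϱ ≥ 2, and utility u^r : A^r × Θ → [0,1]. Let 0 < ε ≤ 1, 0 < δ ≤ 1, p* ∈ Δ_Θ, and k = ⌈32·ln(4·n̄·ϱ/δ)/ε²⌉. Let γ̃ be the empirical distribution of k i.i.d. samples drawn from p*, and let P = {p ∈ Δ_Θ : |Σ_θ p_θ·u^r(a,θ) − Σ_θ p*_θ·u^r(a,θ)| ≤ ε/2 for every receiver r and every a ∈ A^r}. Then for every θ ∈ Θ, E[γ̃_θ · 1{γ̃ ∈ P}] ≥ (1 − δ)·p*_θ. -/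

import Mathlib

open Finset

/-- The empirical distribution of a vector `s` of `k` samples from `Θ`:
`empDist s θ` is the fraction of samples equal to `θ`. -/
noncomputable def empDist {Θ : Type*} [Fintype Θ] [DecidableEq Θ] {k : ℕ}
    (s : Fin k → Θ) (θ : Θ) : ℝ :=
  ((Finset.univ.filter fun t => s t = θ).card : ℝ) / k

/-!
Write `γ̃_θ` as the average over `t` of the indicators `1{s_t = θ}`. It then suffices to bound, for
one fixed sample `t`, the probability that `s_t = θ` while some empirical utility is more than `ε/2`
away from its mean. The other samples are independent of `s_t`, and a single sample contributes at
most `1/k ≤ ε/4` to this deviation, so the event forces the other samples alone to contribute at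
least `ε/4`. Its probability is therefore at most `p*_θ` times a Hoeffding tail, and a union bound
over the at most `n̄ϱ` utilities bounds the lost fraction by `δ`.
-/

open MeasureTheory ProbabilityTheory
open scoped NNReal

section SubGaussian

variable {Ω : Type*} [MeasurableSpace Ω] {P : Measure Ω}

lemma hasSubgaussianMGF_mono {Z : Ω → ℝ} {c d : ℝ≥0} (hZ : HasSubgaussianMGF Z c P)
    (hcd : c ≤ d) : HasSubgaussianMGF Z d P where
  integrable_exp_mul := hZ.integrable_exp_mul
  mgf_le t := (hZ.mgf_le t).trans (by gcongr)

lemma measureReal_le_abs_le_two_mul_exp {Z : Ω → ℝ} {c : ℝ≥0}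
    (hZ : HasSubgaussianMGF Z c P) {b : ℝ} (hb : 0 ≤ b) :
    P.real {ω | b ≤ |Z ω|} ≤ 2 * Real.exp (-b ^ 2 / (2 * c)) := by
  have htails : {ω | b ≤ |Z ω|} = {ω | b ≤ Z ω} ∪ {ω | b ≤ (-Z) ω} := by
    ext ω
    exact le_abs (a := b) (b := Z ω)
  calc P.real {ω | b ≤ |Z ω|} ≤ P.real {ω | b ≤ Z ω} + P.real {ω | b ≤ (-Z) ω} := by
        rw [htails]
        exact measureReal_union_le _ _
    _ ≤ 2 * Real.exp (-b ^ 2 / (2 * c)) := by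
        linarith [hZ.measure_ge_le hb, hZ.neg.measure_ge_le hb]

end SubGaussian

section SampleMean

variable {Θ κ : Type*} [Fintype κ]

/-- The average of `f` over the sample vector `s`, that is, the expectation of `f` under the
empirical distribution of `s`; on the indicator of a set it is the empirical frequency of that set.
It is `0` when there are no samples. -/
noncomputable def sampleMean (f : Θ → ℝ) (s : κ → Θ) : ℝ :=
  (∑ t, f (s t)) / Fintype.card κ

lemma sum_sub_eq_card_mul_sampleMean_sub [Nonempty κ] (f : Θ → ℝ) (s : κ → Θ) (m : ℝ) :
    ∑ t, (f (s t) - m) = Fintype.card κ * (sampleMean f s - m) := by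
  simp only [sampleMean, sum_sub_distrib, sum_const, card_univ, nsmul_eq_mul]
  field_simp

lemma half_mul_le_abs_sum_erase_of_lt_abs_sampleMean_sub [DecidableEq κ] {f : Θ → ℝ}
    (hf : ∀ x, f x ∈ Set.Icc 0 1) {m η : ℝ} (hm : m ∈ Set.Icc 0 1)
    (hη : 2 ≤ Fintype.card κ * η) {s : κ → Θ} (hs : η < |sampleMean f s - m|) (t₀ : κ) :
    Fintype.card κ * η / 2 ≤ |∑ t ∈ univ.erase t₀, (f (s t) - m)| := by
  have : Nonempty κ := ⟨t₀⟩
  have htotal : Fintype.card κ * η ≤ |∑ t, (f (s t) - m)| := by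
    rw [sum_sub_eq_card_mul_sampleMean_sub, abs_mul, Nat.abs_cast]
    gcongr
  have hone : |f (s t₀) - m| ≤ 1 :=
    abs_le.mpr ⟨by linarith [(hf (s t₀)).1, hm.2], by linarith [(hf (s t₀)).2, hm.1]⟩
  rw [← add_sum_erase _ _ (mem_univ t₀)] at htotal
  linarith [abs_add_le (f (s t₀) - m) (∑ t ∈ univ.erase t₀, (f (s t) - m))]

end SampleMean

section Sampling

variable {Ω Θ κ : Type*} [MeasurableSpace Ω] [MeasurableSpace Θ]
  {P : Measure Ω} {μ : Measure Θ} {X : κ → Ω → Θ}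

lemma indepFun_sum_comp_of_notMem (hindep : iIndepFun X P) (hX : ∀ t, AEMeasurable (X t) P)
    {g : Θ → ℝ} (hg : Measurable g) {s : Finset κ} {t₀ : κ} (ht₀ : t₀ ∉ s) :
    IndepFun (X t₀) (fun ω => ∑ t ∈ s, g (X t ω)) P := by
  have htuples := hindep.indepFun_finset₀ {t₀} s (disjoint_singleton_left.mpr ht₀) hX
  have hsum : Measurable fun x : s → Θ => ∑ t, g (x t) := by fun_prop
  simp_rw [← sum_coe_sort s fun t => g (X t _)]
  exact htuples.comp (measurable_pi_apply ⟨t₀, mem_singleton_self t₀⟩) hsum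

lemma hasSubgaussianMGF_sum_comp_sub_integral (hindep : iIndepFun X P)
    (hX : ∀ t, HasLaw (X t) μ P) {f : Θ → ℝ} (hf : Measurable f) {a b : ℝ}
    (hfab : ∀ x, f x ∈ Set.Icc a b) (s : Finset κ) :
    HasSubgaussianMGF (fun ω => ∑ t ∈ s, (f (X t ω) - ∫ x, f x ∂μ))
      (#s * (‖b - a‖₊ / 2) ^ 2) P := by
  have := hindep.isProbabilityMeasure
  have hterm : ∀ t, HasSubgaussianMGF (fun ω => f (X t ω) - ∫ x, f x ∂μ)
      ((‖b - a‖₊ / 2) ^ 2) P := by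
    intro t
    rw [← (hX t).integral_comp hf.aestronglyMeasurable]
    exact hasSubgaussianMGF_of_mem_Icc (hf.comp_aemeasurable (hX t).aemeasurable)
      (ae_of_all P fun ω => hfab (X t ω))
  have hsum := HasSubgaussianMGF.sum_of_iIndepFun
    (hindep.comp (fun _ x => f x - ∫ y, f y ∂μ) fun _ => by fun_prop) (s := s)
    (fun t _ => hterm t)
  rwa [sum_const, nsmul_eq_mul] at hsum

variable [Fintype κ]

lemma measureReal_le_abs_sum_comp_sub_integral_le (hindep : iIndepFun X P)
    (hX : ∀ t, HasLaw (X t) μ P) {f : Θ → ℝ} (hf : Measurable f) {a b : ℝ}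
    (hfab : ∀ x, f x ∈ Set.Icc a b) (s : Finset κ) {c : ℝ} (hc : 0 ≤ c) :
    P.real {ω | c ≤ |∑ t ∈ s, (f (X t ω) - ∫ x, f x ∂μ)|} ≤
      2 * Real.exp (-(2 * c ^ 2 / (Fintype.card κ * (b - a) ^ 2))) := by
  have hsub : HasSubgaussianMGF (fun ω => ∑ t ∈ s, (f (X t ω) - ∫ x, f x ∂μ))
      (Fintype.card κ * (‖b - a‖₊ / 2) ^ 2) P := by
    refine hasSubgaussianMGF_mono
      (hasSubgaussianMGF_sum_comp_sub_integral hindep hX hf hfab s) ?_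
    gcongr
    exact card_le_univ s
  convert measureReal_le_abs_le_two_mul_exp hsub hc using 3
  push_cast
  rw [Real.norm_eq_abs, div_pow, sq_abs]
  field_simp

lemma measureReal_preimage_inter_lt_abs_sampleMean_sub_le (hindep : iIndepFun X P)
    (hX : ∀ t, HasLaw (X t) μ P) {f : Θ → ℝ} (hf : Measurable f)
    (hf01 : ∀ x, f x ∈ Set.Icc 0 1) {η : ℝ} (hη : 2 ≤ Fintype.card κ * η)
    {B : Set Θ} (hB : MeasurableSet B) (t₀ : κ) :
    P.real (X t₀ ⁻¹' B ∩ {ω | η < |sampleMean f (X · ω) - ∫ x, f x ∂μ|}) ≤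
      μ.real B * (2 * Real.exp (-(Fintype.card κ * η ^ 2 / 2))) := by
  classical
  have := hindep.isProbabilityMeasure
  have : IsProbabilityMeasure μ := (hX t₀).isProbabilityMeasure_iff.mp this
  have hmean : ∫ x, f x ∂μ ∈ Set.Icc 0 1 :=
    (convex_Icc 0 1).integral_mem isClosed_Icc (ae_of_all μ hf01)
      (.of_mem_Icc 0 1 hf.aemeasurable (ae_of_all μ hf01))
  have hcard : (Fintype.card κ : ℝ) ≠ 0 := by
    exact_mod_cast (Fintype.card_pos_iff.mpr ⟨t₀⟩).ne'
  set b : ℝ := Fintype.card κ * η / 2 with hb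
  set Z : Ω → ℝ := fun ω => ∑ t ∈ univ.erase t₀, (f (X t ω) - ∫ x, f x ∂μ)
  have hindepZ : IndepFun (X t₀) Z P :=
    indepFun_sum_comp_of_notMem hindep (fun t => (hX t).aemeasurable) (hf.sub_const _)
      (notMem_erase t₀ univ)
  have htail : P.real {ω | b ≤ |Z ω|} ≤ 2 * Real.exp (-(Fintype.card κ * η ^ 2 / 2)) := by
    convert measureReal_le_abs_sum_comp_sub_integral_le hindep hX hf hf01 (univ.erase t₀)
      (c := b) (by linarith) using 4
    rw [hb]
    field_simp
    ring
  calc P.real (X t₀ ⁻¹' B ∩ {ω | η < |sampleMean f (X · ω) - ∫ x, f x ∂μ|})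
      ≤ P.real (X t₀ ⁻¹' B ∩ Z ⁻¹' {z | b ≤ |z|}) :=
        measureReal_mono (Set.inter_subset_inter_right _ fun ω hω =>
          half_mul_le_abs_sum_erase_of_lt_abs_sampleMean_sub hf01 hmean hη hω t₀)
    _ = P.real (X t₀ ⁻¹' B) * P.real {ω | b ≤ |Z ω|} := by
        rw [measureReal_def, hindepZ.measure_inter_preimage_eq_mul _ _ hB
          (measurableSet_le measurable_const (by fun_prop)), ENNReal.toReal_mul]
        rfl
    _ = μ.real B * P.real {ω | b ≤ |Z ω|} := by
        congr 1
        exact (hX t₀).measureReal_eq hB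
    _ ≤ μ.real B * (2 * Real.exp (-(Fintype.card κ * η ^ 2 / 2))) := by gcongr

lemma one_sub_mul_measureReal_le_measureReal_preimage_inter {ι : Type*} [Fintype ι]
    (hindep : iIndepFun X P) (hX : ∀ t, HasLaw (X t) μ P) {f : ι → Θ → ℝ}
    (hf : ∀ i, Measurable (f i)) (hf01 : ∀ i x, f i x ∈ Set.Icc 0 1) {η : ℝ}
    (hη : 2 ≤ Fintype.card κ * η) {B : Set Θ} (hB : MeasurableSet B) (t₀ : κ) :
    (1 - Fintype.card ι * (2 * Real.exp (-(Fintype.card κ * η ^ 2 / 2)))) * μ.real B ≤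
      P.real (X t₀ ⁻¹' B ∩ {ω | ∀ i, |sampleMean (f i) (X · ω) - ∫ x, f i x ∂μ| ≤ η}) := by
  have := hindep.isProbabilityMeasure
  set E := X t₀ ⁻¹' B
  set good := {ω | ∀ i, |sampleMean (f i) (X · ω) - ∫ x, f i x ∂μ| ≤ η}
  set bad : ι → Set Ω := fun i => {ω | η < |sampleMean (f i) (X · ω) - ∫ x, f i x ∂μ|}
  have hcover : E ⊆ (E ∩ good) ∪ ⋃ i, E ∩ bad i := by
    intro ω hω
    by_cases hgood : ω ∈ good
    · exact Or.inl ⟨hω, hgood⟩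
    · obtain ⟨i, hi⟩ := not_forall.mp hgood
      exact Or.inr (Set.mem_iUnion.mpr ⟨i, hω, not_le.mp hi⟩)
  have hE : P.real E = μ.real B := (hX t₀).measureReal_eq hB
  have hbad : P.real (⋃ i, E ∩ bad i) ≤
      Fintype.card ι * (μ.real B * (2 * Real.exp (-(Fintype.card κ * η ^ 2 / 2)))) :=
    calc P.real (⋃ i, E ∩ bad i) ≤ ∑ i, P.real (E ∩ bad i) := measureReal_iUnion_fintype_le _
      _ ≤ ∑ _i : ι, μ.real B * (2 * Real.exp (-(Fintype.card κ * η ^ 2 / 2))) :=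
        sum_le_sum fun i _ => measureReal_preimage_inter_lt_abs_sampleMean_sub_le hindep hX (hf i)
          (hf01 i) hη hB t₀
      _ = _ := by rw [sum_const, card_univ, nsmul_eq_mul]
  linarith [(measureReal_mono hcover).trans (measureReal_union_le (μ := P) _ _)]

lemma setIntegral_sampleMean_indicator [IsFiniteMeasure P] (hX : ∀ t, AEMeasurable (X t) P)
    {B : Set Θ} (hB : MeasurableSet B) (S : Set Ω) :
    ∫ ω in S, sampleMean (B.indicator 1) (X · ω) ∂P =
      (∑ t, P.real (X t ⁻¹' B ∩ S)) / Fintype.card κ := by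
  have hmeas : ∀ t, NullMeasurableSet (X t ⁻¹' B) (P.restrict S) := fun t =>
    (hX t).restrict.nullMeasurableSet_preimage hB
  have hcomp : ∀ t ω, B.indicator (1 : Θ → ℝ) (X t ω) = (X t ⁻¹' B).indicator 1 ω :=
    fun _ _ => rfl
  simp only [sampleMean, hcomp, integral_div]
  rw [integral_finsetSum _ fun t _ => (integrable_const 1).indicator₀ (hmeas t)]
  congr! 2 with t
  rw [integral_indicator₀ (hmeas t), ← measureReal_restrict_apply₀ (hmeas t)]
  simp

lemma one_sub_mul_measureReal_le_setIntegral_sampleMean_indicator {ι : Type*} [Fintype ι]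
    [Nonempty κ] (hindep : iIndepFun X P) (hX : ∀ t, HasLaw (X t) μ P) {f : ι → Θ → ℝ}
    (hf : ∀ i, Measurable (f i)) (hf01 : ∀ i x, f i x ∈ Set.Icc 0 1) {η : ℝ}
    (hη : 2 ≤ Fintype.card κ * η) {B : Set Θ} (hB : MeasurableSet B) :
    (1 - Fintype.card ι * (2 * Real.exp (-(Fintype.card κ * η ^ 2 / 2)))) * μ.real B ≤
      ∫ ω in {ω | ∀ i, |sampleMean (f i) (X · ω) - ∫ x, f i x ∂μ| ≤ η},
        sampleMean (B.indicator 1) (X · ω) ∂P := by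
  have := hindep.isProbabilityMeasure
  rw [setIntegral_sampleMean_indicator (fun t => (hX t).aemeasurable) hB,
    le_div_iff₀' (by exact_mod_cast Fintype.card_pos), ← nsmul_eq_mul]
  exact card_nsmul_le_sum univ _ _ fun t _ =>
    one_sub_mul_measureReal_le_measureReal_preimage_inter hindep hX hf hf01 hη hB t

end Sampling

section SampleSize

lemma one_le_log_four_mul_div {N δ : ℝ} (hN : 1 ≤ N) (hδ0 : 0 < δ) (hδ1 : δ ≤ 1) :
    1 ≤ Real.log (4 * N / δ) := by
  have hratio : 4 ≤ 4 * N / δ := by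
    rw [le_div_iff₀ hδ0]
    linarith
  rw [Real.le_log_iff_exp_le (by linarith)]
  linarith [Real.exp_one_lt_three]

lemma mul_two_mul_exp_le_of_log_le {N δ x : ℝ} (hN : 0 < N) (hδ : 0 < δ)
    (hx : Real.log (4 * N / δ) ≤ x) : N * (2 * Real.exp (-x)) ≤ δ := by
  have hexp : Real.exp (-x) ≤ δ / (4 * N) :=
    calc Real.exp (-x) ≤ Real.exp (-Real.log (4 * N / δ)) := by gcongr
      _ = δ / (4 * N) := by rw [Real.exp_neg, Real.exp_log (by positivity), inv_div]
  rw [le_div_iff₀ (by positivity)] at hexp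
  linarith

lemma card_sigma_le_card_mul {R : Type*} [Fintype R] {A : R → Type*} [∀ r, Fintype (A r)]
    {ϱ : ℕ} (hϱ : ∀ r, Fintype.card (A r) ≤ ϱ) :
    Fintype.card (Σ r, A r) ≤ Fintype.card R * ϱ := by
  rw [Fintype.card_sigma]
  simpa using sum_le_card_nsmul univ _ ϱ fun r _ => hϱ r

end SampleSize

theorem bicriteria_3_general
    {Ω Θ κ R : Type*} [MeasurableSpace Ω] [MeasurableSpace Θ] [Fintype κ] [Fintype R] [Nonempty R]
    {A : R → Type*} [∀ r, Fintype (A r)] [∀ r, Nonempty (A r)]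
    {ϱ : ℕ} (hϱ : ∀ r, Fintype.card (A r) ≤ ϱ)
    {u : (r : R) → A r → Θ → ℝ} (hu : ∀ r a, Measurable (u r a))
    (hu01 : ∀ r a θ, u r a θ ∈ Set.Icc 0 1)
    {ε δ : ℝ} (hε0 : 0 < ε) (hε1 : ε ≤ 1) (hδ0 : 0 < δ) (hδ1 : δ ≤ 1)
    (hcard : 32 * Real.log (4 * Fintype.card R * ϱ / δ) / ε ^ 2 ≤ Fintype.card κ)
    {P : Measure Ω} {μ : Measure Θ} {X : κ → Ω → Θ}
    (hindep : iIndepFun X P) (hX : ∀ t, HasLaw (X t) μ P)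
    {B : Set Θ} (hB : MeasurableSet B) :
    (1 - δ) * μ.real B ≤
      ∫ ω in {ω | ∀ r a, |sampleMean (u r a) (X · ω) - ∫ θ, u r a θ ∂μ| ≤ ε / 2},
        sampleMean (B.indicator 1) (X · ω) ∂P := by
  set N : ℝ := Fintype.card R * ϱ
  have hN : (Fintype.card (Σ r, A r) : ℝ) ≤ Fintype.card R * ϱ := by
    exact_mod_cast card_sigma_le_card_mul hϱ
  have : Nonempty (Σ r, A r) := nonempty_sigma.mpr ⟨Classical.arbitrary R, inferInstance⟩
  have hN1 : 1 ≤ N := le_trans (by exact_mod_cast Fintype.card_pos (α := Σ r, A r)) hN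
  have hlog : 1 ≤ Real.log (4 * N / δ) := one_le_log_four_mul_div hN1 hδ0 hδ1
  rw [mul_assoc, div_le_iff₀ (by positivity)] at hcard
  have hshift : 2 ≤ Fintype.card κ * (ε / 2) := by nlinarith
  have : Nonempty κ := by
    by_contra h
    norm_num [not_nonempty_iff.mp h] at hshift
  have hloss : Fintype.card (Σ r, A r) *
      (2 * Real.exp (-(Fintype.card κ * (ε / 2) ^ 2 / 2))) ≤ δ :=
    (mul_le_mul_of_nonneg_right hN (by positivity)).trans
      (mul_two_mul_exp_le_of_log_le (by linarith) hδ0 (by linarith))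
  have hmain := one_sub_mul_measureReal_le_setIntegral_sampleMean_indicator hindep hX
    (f := fun i : Σ r, A r => u i.1 i.2) (fun i => hu i.1 i.2) (fun i => hu01 i.1 i.2) hshift hB
  simp only [Sigma.forall] at hmain
  exact (mul_le_mul_of_nonneg_right (by linarith) measureReal_nonneg).trans hmain

section FiniteStates

lemma setIntegral_pi_eq_sum_filter {κ : Type*} [Fintype κ] [DecidableEq κ] {Θ : κ → Type*}
    [∀ t, Fintype (Θ t)] [∀ t, MeasurableSpace (Θ t)] [∀ t, MeasurableSingletonClass (Θ t)]
    (μ : ∀ t, Measure (Θ t)) [∀ t, IsFiniteMeasure (μ t)] (Q : (∀ t, Θ t) → Prop)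
    [DecidablePred Q] (F : (∀ t, Θ t) → ℝ) :
    ∫ s in {s | Q s}, F s ∂Measure.pi μ = ∑ s with Q s, (∏ t, (μ t).real {s t}) * F s := by
  rw [← coe_filter_univ, setIntegral_finset _ (.of_finite (finite_toSet _))]
  simp only [measureReal_def, Measure.pi_singleton, ENNReal.toReal_prod, smul_eq_mul]

variable {Θ : Type*} [Fintype Θ]

lemma exists_isProbabilityMeasure_measureReal_singleton_eq [MeasurableSpace Θ]
    [MeasurableSingletonClass Θ] {p : Θ → ℝ} (hp0 : ∀ x, 0 ≤ p x) (hp1 : ∑ x, p x = 1) :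
    ∃ μ : Measure Θ, IsProbabilityMeasure μ ∧ ∀ x, μ.real {x} = p x := by
  have hsum : ∑ x, ENNReal.ofReal (p x) = 1 := by
    rw [← ENNReal.ofReal_sum_of_nonneg fun x _ => hp0 x, hp1, ENNReal.ofReal_one]
  refine ⟨(PMF.ofFintype _ hsum).toMeasure, inferInstance, fun x => ?_⟩
  rw [measureReal_def, PMF.toMeasure_apply_singleton _ _ (measurableSet_singleton x),
    PMF.ofFintype_apply, ENNReal.toReal_ofReal (hp0 x)]

variable [DecidableEq Θ] {k : ℕ}

lemma empDist_eq_sampleMean_indicator (s : Fin k → Θ) (θ : Θ) :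
    empDist s θ = sampleMean (({θ} : Set Θ).indicator 1) s := by
  simp [empDist, sampleMean, Set.indicator_apply]

lemma sum_empDist_mul_eq_sampleMean (s : Fin k → Θ) (f : Θ → ℝ) :
    ∑ θ, empDist s θ * f θ = sampleMean f s := by
  simp only [empDist_eq_sampleMean_indicator, sampleMean, div_mul_eq_mul_div, ← sum_div, sum_mul]
  rw [sum_comm]
  simp [Set.indicator_apply]

end FiniteStates

/-- Lemma 13, `lm:bicriteria_3`.
Let `γ̃` be the empirical distribution of `k` i.i.d. samples from `pstar`, where
`k = ⌈32·ln(4 n̄ ϱ/δ)/ε²⌉`, and let `P` be the set of posteriors whose induced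
expected utilities are `ε/2`-close to those of `pstar` for every receiver and action.
Then for every `θ`, `E[γ̃_θ · 1{γ̃ ∈ P}] ≥ (1 − δ)·pstar θ`.
The expectation is expressed as a sum of the product weights `∏ t, pstar (s t)` over
the sample vectors `s : Fin k → Θ` whose empirical distribution lies in `P`. -/
theorem bicriteria_3
    {Θ R : Type*} [Fintype Θ] [DecidableEq Θ] [Nonempty Θ] [Fintype R]
    (A : R → Type*) [∀ r, Fintype (A r)] [∀ r, Nonempty (A r)]
    (nbar ϱ : ℕ) (hcard : Fintype.card R = nbar) (hn2 : 2 ≤ nbar)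
    (hϱ : ∀ r, Fintype.card (A r) ≤ ϱ) (hϱ2 : 2 ≤ ϱ)
    (u : (r : R) → A r → Θ → ℝ)
    (hu : ∀ r (a : A r) (θ : Θ), u r a θ ∈ Set.Icc (0 : ℝ) 1)
    (ε δ : ℝ) (hε0 : 0 < ε) (hε1 : ε ≤ 1) (hδ0 : 0 < δ) (hδ1 : δ ≤ 1)
    (k : ℕ) (hk : k = ⌈32 * Real.log (4 * nbar * ϱ / δ) / ε ^ 2⌉₊)
    (pstar : Θ → ℝ) (hp0 : ∀ θ, 0 ≤ pstar θ) (hp1 : ∑ θ, pstar θ = 1)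
    (θ : Θ) :
    (1 - δ) * pstar θ ≤
      ∑ s ∈ Finset.univ.filter (fun s : Fin k → Θ =>
            ∀ r (a : A r),
              |(∑ θ', empDist s θ' * u r a θ') - ∑ θ', pstar θ' * u r a θ'| ≤ ε / 2),
          (∏ t, pstar (s t)) * empDist s θ := by
  let : MeasurableSpace Θ := ⊤
  have : Nonempty R := Fintype.card_pos_iff.mp (by omega)
  obtain ⟨μ, _, hμ⟩ := exists_isProbabilityMeasure_measureReal_singleton_eq hp0 hp1
  have hmain := bicriteria_3_general hϱ (fun _ _ => measurable_from_top) hu hε0 hε1 hδ0 hδ1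
    (κ := Fin k) (by rw [hcard, Fintype.card_fin, hk]; exact Nat.le_ceil _)
    (X := fun t (s : Fin k → Θ) => s t) (iIndepFun_pi fun _ => aemeasurable_id)
    (fun t => (measurePreserving_eval (fun _ => μ) t).hasLaw) (measurableSet_singleton θ)
  simp only [sum_empDist_mul_eq_sampleMean]
  simpa only [setIntegral_pi_eq_sum_filter, hμ, integral_fintype (.of_finite : Integrable _ μ),
    smul_eq_mul, empDist_eq_sampleMean_indicator] using hmain
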